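/- arXiv:1811.03496 — 3 statements merged into one kernel-verified Lean document; each statement's English description precedes it below -/
import Mathlib

section
/- Consider the affinity dynamics of a single task over N agents (N ≥ 1) with an arbitrary assignment sequence σ. For every cycle k, the affinity function is injective on agents that have been assigned at least once: if a k i = a k j and a k i ≤ k, then i = j. -/
/-- Affinity dynamics of a single task over `N` agents with assignment
sequence `σ`: initially all affinities are 1; the assigned agent's affinity
is reset to 1, every other agent's affinity is incremented. -/
def affinity {N : ℕ} (σ : ℕ → Fin N) : ℕ → Fin N → ℕ
  | 0, _ => 1
  | k + 1, i => if σ k = i then 1 else affinity σ k i + 1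

/-- Affinity pressure of the task at cycle `k`. -/
def AP {N : ℕ} (σ : ℕ → Fin N) (k : ℕ) : ℚ :=
  (∑ i : Fin N, (affinity σ k i : ℚ)) / N - (N + 1) / 2

/-- `σ` is greedy (max-affinity): at every cycle the assigned agent has
maximal affinity. -/
def Greedy {N : ℕ} (σ : ℕ → Fin N) : Prop :=
  ∀ k i, affinity σ k i ≤ affinity σ k (σ k)

section

variable {N : ℕ} {σ : ℕ → Fin N} {k : ℕ} {i : Fin N}

theorem affinity_zero : affinity σ 0 i = 1 := rfl

theorem affinity_succ_of_eq (h : σ k = i) : affinity σ (k + 1) i = 1 := if_pos h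

theorem affinity_succ_of_ne (h : σ k ≠ i) : affinity σ (k + 1) i = affinity σ k i + 1 := if_neg h

/-- An agent not assigned before cycle `k` has affinity `k + 1`, so `h` says that `i` has been
assigned; its affinity is then the time elapsed since its latest assignment. -/
theorem assigned_at_sub_affinity (h : affinity σ k i ≤ k) : σ (k - affinity σ k i) = i := by
  induction k with
  | zero => simp [affinity_zero] at h
  | succ k ih =>
    by_cases hσ : σ k = i
    · rw [affinity_succ_of_eq hσ, Nat.add_sub_cancel, hσ]
    · rw [affinity_succ_of_ne hσ] at h ⊢
      rw [Nat.add_sub_add_right]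
      exact ih (Nat.le_of_succ_le_succ h)

end

theorem affinity_injective_on_assigned {N : ℕ} (hN : 1 ≤ N) (σ : ℕ → Fin N)
    (k : ℕ) (i j : Fin N) (hij : affinity σ k i = affinity σ k j)
    (hk : affinity σ k i ≤ k) : i = j := by
  calc
    i = σ (k - affinity σ k i) := (assigned_at_sub_affinity hk).symm
    _ = σ (k - affinity σ k j) := by rw [hij]
    _ = j := assigned_at_sub_affinity (hij ▸ hk)
end

section
/- Consider the affinity dynamics of a single task over N agents (N ≥ 1) with the round-robin assignment sequence σ t = t mod N. Then for every cycle k ≥ N − 1, the affinity pressure is zero: AP k = 0; in particular ∑ i, a k i = N (N + 1) / 2. -/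
/-! At a cycle `k ≥ N - 1`, the agent about to be served was last served `N` cycles earlier, or never
if `k = N - 1`; either way its affinity is exactly `N`. The agent served at cycle `k + j` with
`j < N` gains one unit per cycle until it gets there, so at cycle `k` its affinity is `N - j`. Each
agent is served exactly once in the cycles `k, …, k + N - 1`, hence the affinities at cycle `k` are
`1, …, N` in some order. -/

/-- Round-robin scheduling in an arbitrary order of the agents: any `N` consecutive cycles serve
pairwise distinct agents. This encoding does not refer to the labels of the agents, unlike the
specific order `σ t = t % N`. -/
def IsRoundRobin {N : ℕ} (σ : ℕ → Fin N) : Prop :=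
  ∀ t, Set.InjOn σ (Set.Ico t (t + N))

section

variable {N : ℕ} {σ : ℕ → Fin N}

theorem affinity_succ_self (σ : ℕ → Fin N) (k : ℕ) : affinity σ (k + 1) (σ k) = 1 :=
  if_pos rfl

theorem affinity_add_of_forall_ne {i : Fin N} {k j : ℕ}
    (h : ∀ t, k ≤ t → t < k + j → σ t ≠ i) : affinity σ (k + j) i = affinity σ k i + j := by
  induction j with
  | zero => rfl
  | succ j ih =>
    calc affinity σ (k + (j + 1)) i
        = affinity σ (k + j) i + 1 := if_neg (h (k + j) (by omega) (by omega))
      _ = affinity σ k i + (j + 1) := by rw [ih fun t hkt htj => h t hkt (by omega), add_assoc]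

theorem AP_eq_zero_iff (σ : ℕ → Fin N) (k : ℕ) :
    AP σ k = 0 ↔ (∑ i, affinity σ k i) * 2 = N * (N + 1) := by
  have hN : (N : ℚ) ≠ 0 := Nat.cast_ne_zero.mpr (σ 0).pos.ne'
  rw [AP, sub_eq_zero, div_eq_div_iff hN two_ne_zero, mul_comm ((N : ℚ) + 1)]
  exact_mod_cast Iff.rfl

namespace IsRoundRobin

theorem of_val_eq_mod (hσ : ∀ t, (σ t : ℕ) = t % N) : IsRoundRobin σ := by
  intro t a ha b hb hab
  have hmod : a % N = b % N := by rw [← hσ, ← hσ, hab]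
  exact Nat.mod_injOn_Ico t N (by simpa using ha) (by simpa using hb) hmod

theorem apply_ne (hσ : IsRoundRobin σ) {s t : ℕ} (hst : s < t) (hts : t < s + N) : σ s ≠ σ t :=
  fun h => hst.ne (hσ s ⟨le_rfl, by omega⟩ ⟨hst.le, hts⟩ h)

theorem bijective_window (hσ : IsRoundRobin σ) (k : ℕ) :
    Function.Bijective fun j : Fin N => σ (k + j) := by
  refine Finite.injective_iff_bijective.mp fun a b hab => Fin.ext ?_
  exact Nat.add_left_cancel (hσ k ⟨by omega, by omega⟩ ⟨by omega, by omega⟩ hab)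

theorem periodic (hσ : IsRoundRobin σ) : Function.Periodic σ N := by
  intro t
  obtain ⟨j, hj : σ (t + j) = σ (t + N)⟩ := (hσ.bijective_window t).surjective (σ (t + N))
  obtain hj0 | hj0 := Nat.eq_zero_or_pos j
  · rw [← hj, hj0, add_zero]
  · exact absurd hj (hσ.apply_ne (by omega) (by omega))

theorem affinity_apply_self (hσ : IsRoundRobin σ) {k : ℕ} (hk : N ≤ k + 1) :
    affinity σ k (σ k) = N := by
  obtain hkN | hNk := Nat.lt_or_ge k N
  · have never_served : ∀ t, 0 ≤ t → t < 0 + k → σ t ≠ σ k :=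
      fun t _ ht => hσ.apply_ne (by omega) (by omega)
    calc affinity σ k (σ k) = affinity σ (0 + k) (σ k) := by rw [zero_add]
      _ = 1 + k := affinity_add_of_forall_ne never_served
      _ = N := by omega
  · obtain ⟨m, rfl⟩ := Nat.exists_eq_add_of_le' hNk
    have hN : 0 < N := (σ 0).pos
    have not_served_since : ∀ t, m + 1 ≤ t → t < m + 1 + (N - 1) → σ t ≠ σ m :=
      fun t hmt htN => (hσ.apply_ne (by omega) (by omega)).symm
    calc affinity σ (m + N) (σ (m + N)) = affinity σ (m + 1 + (N - 1)) (σ m) := by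
          rw [hσ.periodic m, show m + 1 + (N - 1) = m + N by omega]
      _ = 1 + (N - 1) := by
          rw [affinity_add_of_forall_ne not_served_since, affinity_succ_self]
      _ = N := by omega

theorem affinity_apply_add (hσ : IsRoundRobin σ) {k j : ℕ} (hk : N ≤ k + 1) (hj : j < N) :
    affinity σ k (σ (k + j)) = N - j := by
  have not_served_before : ∀ t, k ≤ t → t < k + j → σ t ≠ σ (k + j) :=
    fun t hkt htj => hσ.apply_ne htj (by omega)
  have hwait := affinity_add_of_forall_ne not_served_before
  rw [hσ.affinity_apply_self (by omega)] at hwait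
  omega

theorem sum_affinity (hσ : IsRoundRobin σ) {k : ℕ} (hk : N ≤ k + 1) :
    ∑ i, affinity σ k i = ∑ j ∈ Finset.range (N + 1), j :=
  calc ∑ i, affinity σ k i
      = ∑ j : Fin N, affinity σ k (σ (k + j)) := ((hσ.bijective_window k).sum_comp _).symm
    _ = ∑ j : Fin N, (N - j) :=
        Finset.sum_congr rfl fun j _ => hσ.affinity_apply_add hk j.isLt
    _ = ∑ j ∈ Finset.range N, (N - j) := Fin.sum_univ_eq_sum_range (N - ·) N
    _ = ∑ j ∈ Finset.range (N + 1), (N - j) := by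
        rw [Finset.sum_range_succ, Nat.sub_self, add_zero]
    _ = ∑ j ∈ Finset.range (N + 1), j := Finset.sum_flip fun j => j

end IsRoundRobin

theorem roundRobin_AP_eq_zero_general (hσ : IsRoundRobin σ) {k : ℕ} (hk : N ≤ k + 1) :
    AP σ k = 0 ∧ ∑ i, affinity σ k i = N * (N + 1) / 2 := by
  have hsum : (∑ i, affinity σ k i) * 2 = N * (N + 1) := by
    rw [hσ.sum_affinity hk, Finset.sum_range_id_mul_two, Nat.add_sub_cancel, mul_comm]
  exact ⟨(AP_eq_zero_iff σ k).mpr hsum, Nat.eq_div_of_mul_eq_left two_ne_zero hsum⟩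

end

theorem roundRobin_AP_eq_zero {N : ℕ} (hN : 1 ≤ N) (σ : ℕ → Fin N)
    (hσ : ∀ t, (σ t : ℕ) = t % N) :
    ∀ k, N - 1 ≤ k →
      AP σ k = 0 ∧ ∑ i : Fin N, affinity σ k i = N * (N + 1) / 2 :=
  fun _ hk => roundRobin_AP_eq_zero_general (.of_val_eq_mod hσ) (Nat.sub_le_iff_le_add.mp hk)
end

section
/- Let N ≥ 1 and consider the affinity dynamics of a single task over N agents with a greedy (max-affinity) assignment sequence σ. Then for every cycle k ≥ N − 1, the agent chosen at cycle k has affinity exactly N: a k (σ k) = N. -/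
/-!
In each cycle every affinity goes up by one except that of the chosen agent, so the agents above
level `m + 1` at cycle `k + 1` are those above level `m` at cycle `k`, minus the chosen one. A
greedy choice has maximal affinity, so it lies above every level that some agent lies above, and
each such step removes exactly one agent until none is left. All `N` agents are above level `0`,
so at every cycle `k ≥ m` exactly `N - m` (truncated) agents are above level `m`. As no affinity
exceeds `k + 1`, the maximal affinity at cycle `k` is `min (k + 1) N`.
-/

section

variable {N : ℕ} (σ : ℕ → Fin N) (k m : ℕ)

theorem affinity_pos (i : Fin N) : 0 < affinity σ k i := by
  cases k with
  | zero => exact Nat.one_pos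
  | succ k =>
    rw [affinity]
    split_ifs <;> exact Nat.succ_pos _

theorem affinity_le_succ (i : Fin N) : affinity σ k i ≤ k + 1 := by
  induction k with
  | zero => exact le_rfl
  | succ k ih =>
    rw [affinity]
    split_ifs <;> omega

theorem succ_lt_affinity_succ_iff (i : Fin N) :
    m + 1 < affinity σ (k + 1) i ↔ i ≠ σ k ∧ m < affinity σ k i := by
  rw [affinity]
  split_ifs with h
  · simp [h]
  · simp [Ne.symm h]

/-- The superlevel set of the affinity at cycle `k`: the agents whose affinity is strictly above
`m`. Its cardinality is the quantity that greediness controls. -/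
def agentsAbove : Finset (Fin N) := {i | m < affinity σ k i}

variable {σ k m} in
theorem mem_agentsAbove {i : Fin N} : i ∈ agentsAbove σ k m ↔ m < affinity σ k i := by
  simp [agentsAbove]

theorem agentsAbove_zero : agentsAbove σ k 0 = Finset.univ :=
  Finset.eq_univ_of_forall fun i ↦ mem_agentsAbove.mpr (affinity_pos σ k i)

theorem agentsAbove_succ_succ :
    agentsAbove σ (k + 1) (m + 1) = (agentsAbove σ k m).erase (σ k) := by
  ext i
  rw [Finset.mem_erase, mem_agentsAbove, mem_agentsAbove, succ_lt_affinity_succ_iff]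

end

namespace Greedy

variable {N : ℕ} {σ : ℕ → Fin N}

theorem agentsAbove_nonempty_iff (hσ : Greedy σ) (k m : ℕ) :
    (agentsAbove σ k m).Nonempty ↔ m < affinity σ k (σ k) := by
  refine ⟨?_, fun h ↦ ⟨σ k, mem_agentsAbove.mpr h⟩⟩
  rintro ⟨i, hi⟩
  exact (mem_agentsAbove.mp hi).trans_le (hσ k i)

theorem card_agentsAbove_succ_succ (hσ : Greedy σ) (k m : ℕ) :
    (agentsAbove σ (k + 1) (m + 1)).card = (agentsAbove σ k m).card - 1 := by
  rw [agentsAbove_succ_succ]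
  rcases (agentsAbove σ k m).eq_empty_or_nonempty with h_empty | h_nonempty
  · simp [h_empty]
  · have h_chosen := (hσ.agentsAbove_nonempty_iff k m).mp h_nonempty
    exact Finset.card_erase_of_mem (mem_agentsAbove.mpr h_chosen)

theorem card_agentsAbove_add (hσ : Greedy σ) (k m : ℕ) :
    (agentsAbove σ (k + m) m).card = N - m := by
  induction m with
  | zero => simp [agentsAbove_zero]
  | succ m ih => rw [← Nat.add_assoc, hσ.card_agentsAbove_succ_succ, ih, Nat.sub_sub]

theorem lt_affinity_chosen_iff (hσ : Greedy σ) (k m : ℕ) :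
    m < affinity σ k (σ k) ↔ m ≤ k ∧ m < N := by
  have of_le (hmk : m ≤ k) : m < affinity σ k (σ k) ↔ m < N := by
    obtain ⟨j, rfl⟩ := Nat.exists_eq_add_of_le' hmk
    rw [← hσ.agentsAbove_nonempty_iff, ← Finset.card_pos, hσ.card_agentsAbove_add,
      Nat.sub_pos_iff_lt]
  have le_of_lt_affinity (h : m < affinity σ k (σ k)) : m ≤ k :=
    Nat.le_of_lt_succ (h.trans_le (affinity_le_succ σ k (σ k)))
  exact ⟨fun h ↦ ⟨le_of_lt_affinity h, (of_le (le_of_lt_affinity h)).mp h⟩,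
    fun ⟨hmk, hmN⟩ ↦ (of_le hmk).mpr hmN⟩

end Greedy

theorem greedy_chosen_affinity_eq_general {N : ℕ} {σ : ℕ → Fin N} (hσ : Greedy σ) (k : ℕ) :
    affinity σ k (σ k) = min (k + 1) N :=
  eq_of_forall_lt_iff fun m ↦ by
    rw [hσ.lt_affinity_chosen_iff, lt_min_iff, Nat.lt_succ_iff]

theorem greedy_chosen_affinity_eq {N : ℕ} (hN : 1 ≤ N) (σ : ℕ → Fin N)
    (hσ : Greedy σ) : ∀ k, N - 1 ≤ k → affinity σ k (σ k) = N := fun k hk ↦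
  (greedy_chosen_affinity_eq_general hσ k).trans (min_eq_right (Nat.le_add_of_sub_le hk))
end
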